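/- arXiv:1603.06552 — 3 statements merged into one kernel-verified Lean document; each statement's English description precedes it below -/
import Mathlib

section
/- Let F be a finite collection of finite sets such that |⋂Γ₁ − ⋃Γ₂| = |⋂Γ₂ − ⋃Γ₁| holds for every partition of F into two nonempty subcollections Γ₁, Γ₂ (i.e., Γ₁, Γ₂ nonempty, disjoint, with Γ₁ ∪ Γ₂ = F). Then every set D ∈ F satisfies 2·|D| = |⋃F| + |⋂F|; in particular all members of F have the same cardinality. -/
open Finset

/-- The union of a finite collection of finite sets. -/
def famUnion (Γ : Finset (Finset ℕ)) : Finset ℕ := Γ.sup id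

/-- The intersection of a finite collection of finite sets
(equal to the usual intersection when the collection is nonempty). -/
def famInter (Γ : Finset (Finset ℕ)) : Finset ℕ :=
  (Γ.sup id).filter (fun x => ∀ A ∈ Γ, x ∈ A)

/-- `F` is a hereditary König–Egerváry (hke) collection with `α(F) = α`:
`α` is a positive integer and `|⋃Γ| + |⋂Γ| = 2α` for every nonempty subcollection `Γ` of `F`. -/
def IsHKE (F : Finset (Finset ℕ)) (α : ℕ) : Prop :=
  0 < α ∧ ∀ Γ ⊆ F, Γ.Nonempty → (famUnion Γ).card + (famInter Γ).card = 2 * α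

/-!
Sort the points of `⋃ F` into the cells of the Venn diagram of `F`, one cell for each subcollection
`Γ`, consisting of the points that lie in exactly the members of `Γ`. For nonempty `Γ` this cell is
`⋂ Γ \ ⋃ (F \ Γ)`, so the hypothesis says that complementary cells have the same size. Now
`D \ ⋂ F` is made of the cells with `D ∈ Γ ≠ F`, and `⋃ F \ D` of those with `D ∉ Γ ≠ ∅`;
complementation exchanges the two kinds, so `|D| - |⋂ F| = |⋃ F| - |D|`.
-/

section VennDiagram

variable {ι α : Type*} [DecidableEq α] {s t : Finset ι} {f : ι → Finset α} {i : ι} {x : α}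

/-- The trace of a point `x` on the family `(f i)_{i ∈ s}`: the indices of the members containing
`x`. It records in which region of the Venn diagram of the family `x` lies. -/
def membershipTrace (s : Finset ι) (f : ι → Finset α) (x : α) : Finset ι :=
  {i ∈ s | x ∈ f i}

theorem mem_membershipTrace : i ∈ membershipTrace s f x ↔ i ∈ s ∧ x ∈ f i :=
  mem_filter

theorem membershipTrace_subset : membershipTrace s f x ⊆ s :=
  filter_subset _ _

theorem membershipTrace_eq_self_iff : membershipTrace s f x = s ↔ ∀ i ∈ s, x ∈ f i :=
  filter_eq_self

theorem membershipTrace_nonempty_iff : (membershipTrace s f x).Nonempty ↔ x ∈ s.sup f := by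
  rw [membershipTrace, filter_nonempty_iff, mem_sup]

variable [DecidableEq ι]

/-- The cell of the Venn diagram of `(f i)_{i ∈ s}` indexed by `t`: the points lying in `f i` for
exactly the indices `i ∈ t`. Points outside all members are left out, so the cell of `∅` is
empty. -/
def vennCell (s : Finset ι) (f : ι → Finset α) (t : Finset ι) : Finset α :=
  {x ∈ s.sup f | membershipTrace s f x = t}

theorem inf'_sdiff_sup_eq_vennCell (hts : t ⊆ s) (ht : t.Nonempty) :
    t.inf' ht f \ (s \ t).sup f = vennCell s f t := by
  ext x
  have trace_eq_iff : membershipTrace s f x = t ↔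
      (∀ i ∈ t, x ∈ f i) ∧ ¬∃ i ∈ s \ t, x ∈ f i := by
    simp only [Finset.ext_iff, mem_membershipTrace, mem_sdiff]
    grind
  rw [mem_sdiff, mem_inf', mem_sup, ← trace_eq_iff, vennCell, mem_filter,
    ← membershipTrace_nonempty_iff]
  exact ⟨fun trace_eq => ⟨trace_eq ▸ ht, trace_eq⟩, And.right⟩

theorem card_filter_membershipTrace_mem (P : Finset (Finset ι)) :
    #{x ∈ s.sup f | membershipTrace s f x ∈ P} = ∑ t ∈ P, #(vennCell s f t) := by
  have mapsTo : Set.MapsTo (membershipTrace s f)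
      ({x ∈ s.sup f | membershipTrace s f x ∈ P} : Finset α) P :=
    fun x hx => (mem_filter.1 hx).2
  rw [card_eq_sum_card_fiberwise mapsTo]
  refine sum_congr rfl fun t ht => congrArg card ?_
  ext x
  simp only [vennCell, mem_filter]
  grind

theorem card_sdiff_inf'_eq_sum_card_vennCell (hi : i ∈ s) :
    #(f i \ s.inf' ⟨i, hi⟩ f) = ∑ t ∈ s.powerset with i ∈ t ∧ t ≠ s, #(vennCell s f t) := by
  rw [← card_filter_membershipTrace_mem]
  congr 1
  ext x
  have mem_sup_of_mem : x ∈ f i → x ∈ s.sup f := fun hx => mem_sup.2 ⟨i, hi, hx⟩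
  have mem_inf_iff : x ∈ s.inf' ⟨i, hi⟩ f ↔ ∀ j ∈ s, x ∈ f j := mem_inf' _
  simp only [mem_sdiff, mem_inf_iff, mem_filter, mem_powerset, membershipTrace_subset,
    mem_membershipTrace, ne_eq, membershipTrace_eq_self_iff]
  tauto

theorem card_sup_sdiff_eq_sum_card_vennCell (hi : i ∈ s) :
    #(s.sup f \ f i) = ∑ t ∈ s.powerset with i ∉ t ∧ t.Nonempty, #(vennCell s f t) := by
  rw [← card_filter_membershipTrace_mem]
  congr 1
  ext x
  simp only [mem_sdiff, mem_filter, mem_powerset, membershipTrace_subset, mem_membershipTrace,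
    membershipTrace_nonempty_iff]
  tauto

theorem card_sdiff_inf'_eq_card_sup_sdiff (hi : i ∈ s)
    (card_compl : ∀ t ⊂ s, t.Nonempty → #(vennCell s f t) = #(vennCell s f (s \ t))) :
    #(f i \ s.inf' ⟨i, hi⟩ f) = #(s.sup f \ f i) := by
  rw [card_sdiff_inf'_eq_sum_card_vennCell hi, card_sup_sdiff_eq_sum_card_vennCell hi]
  refine sum_nbij' (s \ ·) (s \ ·) ?_ ?_ ?_ ?_ ?_ <;>
    simp only [mem_filter, mem_powerset, and_imp]
  · intro t hts hit hne
    exact ⟨sdiff_subset, fun h => (mem_sdiff.1 h).2 hit,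
      sdiff_nonempty.2 fun hst => hne (hts.antisymm hst)⟩
  · intro t hts hit hne
    exact ⟨sdiff_subset, mem_sdiff.2 ⟨hi, hit⟩, (sdiff_ssubset hts hne).ne⟩
  · exact fun t hts _ _ => Finset.sdiff_sdiff_eq_self hts
  · exact fun t hts _ _ => Finset.sdiff_sdiff_eq_self hts
  · exact fun t hts hit hne => card_compl t (hts.ssubset_of_ne hne) ⟨i, hit⟩

theorem card_eq_of_partitions_general (s : Finset ι) (f : ι → Finset α)
    (h : ∀ (t₁ t₂ : Finset ι) (h₁ : t₁.Nonempty) (h₂ : t₂.Nonempty), Disjoint t₁ t₂ →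
      t₁ ∪ t₂ = s → #(t₁.inf' h₁ f \ t₂.sup f) = #(t₂.inf' h₂ f \ t₁.sup f))
    (i : ι) (hi : i ∈ s) :
    2 * #(f i) = #(s.sup f) + #(s.inf' ⟨i, hi⟩ f) := by
  have card_compl (t : Finset ι) (hts : t ⊂ s) (ht : t.Nonempty) :
      #(vennCell s f t) = #(vennCell s f (s \ t)) := by
    have ht' : (s \ t).Nonempty := sdiff_nonempty.2 hts.2
    rw [← inf'_sdiff_sup_eq_vennCell hts.1 ht, ← inf'_sdiff_sup_eq_vennCell sdiff_subset ht',
      Finset.sdiff_sdiff_eq_self hts.1]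
    exact h t (s \ t) ht ht' disjoint_sdiff (union_sdiff_of_subset hts.1)
  have card_sdiff_eq := card_sdiff_inf'_eq_card_sup_sdiff hi card_compl
  have card_sup := card_sdiff_add_card_eq_card (le_sup hi : f i ⊆ s.sup f)
  have card_inf := card_sdiff_add_card_eq_card (inf'_le f hi : s.inf' ⟨i, hi⟩ f ⊆ f i)
  omega

end VennDiagram

theorem famInter_eq_inf' {Γ : Finset (Finset ℕ)} (hΓ : Γ.Nonempty) :
    famInter Γ = Γ.inf' hΓ id := by
  ext x
  rw [famInter, mem_filter, mem_inf', mem_sup]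
  exact ⟨And.right, fun hx => ⟨hΓ.imp fun A hA => ⟨hA, hx A hA⟩, hx⟩⟩

/-- if `|⋂Γ₁ − ⋃Γ₂| = |⋂Γ₂ − ⋃Γ₁|` holds for every partition of `F` into two
nonempty subcollections `Γ₁, Γ₂`, then every `D ∈ F` satisfies `2|D| = |⋃F| + |⋂F|`. -/
theorem card_eq_of_partitions (F : Finset (Finset ℕ))
    (h : ∀ Γ₁ Γ₂ : Finset (Finset ℕ), Γ₁.Nonempty → Γ₂.Nonempty → Disjoint Γ₁ Γ₂ →
      Γ₁ ∪ Γ₂ = F →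
      (famInter Γ₁ \ famUnion Γ₂).card = (famInter Γ₂ \ famUnion Γ₁).card) :
    ∀ D ∈ F, 2 * D.card = (famUnion F).card + (famInter F).card := by
  intro D hD
  exact famInter_eq_inf' ⟨D, hD⟩ ▸ card_eq_of_partitions_general F id
    (fun Γ₁ Γ₂ h₁ h₂ => famInter_eq_inf' h₁ ▸ famInter_eq_inf' h₂ ▸ h Γ₁ Γ₂ h₁ h₂) D hD
end

section
/- Let F be an hke collection and let A ∈ F. Then the map f_A : F → P(A) defined by f_A(D) = A ∩ D is injective; consequently |F| ≤ 2^{α(F)}. -/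
open Finset

/-!
Suppose `A ∩ D = A ∩ E`. Adjoining `E` to `{A, D}` does not change the intersection, so it cannot
change the size of the union either; hence `E ⊆ A ∪ D`. Thus `A ∪ E ⊆ A ∪ D` and `A ∩ E = A ∩ D`,
which forces `E ⊆ D` by distributivity, and `D ⊆ E` by symmetry. Singletons give `|A| = α`, so
`F` embeds in a power set with `2 ^ α` elements.
-/

section

variable {β : Type*} [DecidableEq β]

theorem subset_of_card_union_add_card_inter_le {E U I : Finset β}
    (hcard : #(E ∪ U) + #(E ∩ I) ≤ #U + #I) (hIE : I ⊆ E) : E ⊆ U := by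
  rw [inter_eq_right.2 hIE, Nat.add_le_add_iff_right] at hcard
  exact union_eq_right.1 (eq_of_subset_of_card_le subset_union_right hcard).symm

theorem card_le_two_pow_of_injOn_inter {F : Finset (Finset β)} {A : Finset β}
    (hinj : Set.InjOn (fun D => A ∩ D) ↑F) : #F ≤ 2 ^ #A := by
  rw [← card_powerset]
  exact card_le_card_of_injOn _ (fun _ _ => mem_powerset.2 inter_subset_left) hinj

/-- The König–Egerváry condition `|⋃Γ| + |⋂Γ| = 2α`, imposed only on the nonempty subcollections
`Γ` of `F` with at most `k` members. The intersection is `Finset.inf'`, since the empty infimum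
does not exist in `Finset β` when `β` is infinite. -/
def IsKEUpTo (k : ℕ) (F : Finset (Finset β)) (α : ℕ) : Prop :=
  ∀ Γ ⊆ F, ∀ hΓ : Γ.Nonempty, #Γ ≤ k → #(Γ.sup id) + #(Γ.inf' hΓ id) = 2 * α

namespace IsKEUpTo

variable {F : Finset (Finset β)} {α : ℕ} {A D E : Finset β}

theorem mono {k l : ℕ} (hkl : k ≤ l) (hF : IsKEUpTo l F α) : IsKEUpTo k F α :=
  fun Γ hΓF hΓ hk => hF Γ hΓF hΓ (hk.trans hkl)

theorem card_eq (hF : IsKEUpTo 1 F α) (hA : A ∈ F) : #A = α := by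
  have h := hF {A} (singleton_subset_iff.2 hA) (singleton_nonempty A) (card_singleton A).le
  rw [sup_singleton, inf'_singleton, id] at h
  lia

theorem card_union_add_card_inter (hF : IsKEUpTo 2 F α) (hA : A ∈ F) (hD : D ∈ F) :
    #(A ∪ D) + #(A ∩ D) = 2 * α := by
  simpa using hF {A, D} (by grind) (insert_nonempty ..) card_le_two

theorem card_union_union_add_card_inter_inter (hF : IsKEUpTo 3 F α)
    (hA : A ∈ F) (hD : D ∈ F) (hE : E ∈ F) :
    #(A ∪ (D ∪ E)) + #(A ∩ (D ∩ E)) = 2 * α := by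
  simpa using hF {A, D, E} (by grind) (insert_nonempty ..) card_le_three

theorem subset_of_inter_eq (hF : IsKEUpTo 3 F α) (hA : A ∈ F) (hD : D ∈ F) (hE : E ∈ F)
    (h : A ∩ D = A ∩ E) : E ⊆ D := by
  have hcard : #(E ∪ (A ∪ D)) + #(E ∩ (A ∩ D)) = #(A ∪ D) + #(A ∩ D) :=
    (hF.card_union_union_add_card_inter_inter hE hA hD).trans
      ((hF.mono (Nat.le_succ 2)).card_union_add_card_inter hA hD).symm
  have hEAD : E ⊆ A ∪ D :=
    subset_of_card_union_add_card_inter_le hcard.le (h.trans_subset inter_subset_right)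
  refine le_of_inf_le_sup_le (z := A) ?_ ?_
  · exact (inf_comm E A).trans_le (h.ge.trans (inf_comm A D).le)
  · exact sup_le (hEAD.trans (sup_comm A D).le) le_sup_right

theorem injOn_inter (hF : IsKEUpTo 3 F α) (hA : A ∈ F) : Set.InjOn (fun D => A ∩ D) ↑F :=
  fun _ hD _ hE h =>
    (hF.subset_of_inter_eq hA hE hD h.symm).antisymm (hF.subset_of_inter_eq hA hD hE h)

end IsKEUpTo

theorem interMap_injOn_of_isHKE_general {F : Finset (Finset β)} {α : ℕ} (hF : IsKEUpTo 3 F α)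
    {A : Finset β} (hA : A ∈ F) :
    Set.InjOn (fun D => A ∩ D) ↑F ∧ #F ≤ 2 ^ α := by
  have hinj := hF.injOn_inter hA
  have hcard : #A = α := (hF.mono (by lia)).card_eq hA
  exact ⟨hinj, hcard ▸ card_le_two_pow_of_injOn_inter hinj⟩

end

theorem IsHKE.isKEUpTo {F : Finset (Finset ℕ)} {α : ℕ} (hF : IsHKE F α) (k : ℕ) :
    IsKEUpTo k F α :=
  fun Γ hΓF hΓ _ => famInter_eq_inf' hΓ ▸ hF.2 Γ hΓF hΓ

/-- for an hke collection `F` and `A ∈ F`, the map `D ↦ A ∩ D` is injective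
on `F`; consequently `|F| ≤ 2 ^ α(F)`. -/
theorem interMap_injOn_of_isHKE (F : Finset (Finset ℕ)) (α : ℕ) (hF : IsHKE F α)
    (A : Finset ℕ) (hA : A ∈ F) :
    Set.InjOn (fun D => A ∩ D) ↑F ∧ F.card ≤ 2 ^ α :=
  interMap_injOn_of_isHKE_general (hF.isKEUpTo 3) hA
end

section
/- Let F be an hke collection with |F| = 2^{α(F)}. Then F is a maximal hke collection, i.e., for every set D with D ∉ F, the collection F ∪ {D} is not an hke collection. -/
open Finset

/-!
Every member of an hke collection `F` has `α` elements. If `A, B, C ∈ F` have `A ∩ C = B ∩ C`, then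
the triple condition reads `|A ∪ B ∪ C| + |A ∩ C| = |A| + |C|`, so `A ∪ B ∪ C = A ∪ C` and
`B ⊆ A`. Hence, for a fixed `C ∈ F`, the trace `A ↦ A ∩ C` embeds `F` into the `2 ^ α` subsets
of `C`, leaving no room for a further set once `|F| = 2 ^ α`.
-/

theorem subset_of_inter_eq_inter_of_card_le {ι : Type*} [DecidableEq ι] {A B C : Finset ι}
    (htrace : A ∩ C = B ∩ C) (hcard : #(A ∪ B ∪ C) + #(A ∩ B ∩ C) ≤ #A + #C) : B ⊆ A := by
  have hinter : A ∩ B ∩ C = A ∩ C := by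
    rw [inter_assoc, ← htrace, ← inter_assoc, inter_self]
  have hunion : A ∪ C = A ∪ B ∪ C := by
    refine eq_of_subset_of_card_le (union_subset_union_left subset_union_left) ?_
    rw [hinter, ← card_union_add_card_inter A C] at hcard
    exact Nat.le_of_add_le_add_right hcard
  intro x hxB
  have hxAC : x ∈ A ∪ C := hunion ▸ mem_union_left C (mem_union_right A hxB)
  rcases mem_union.mp hxAC with hxA | hxC
  · exact hxA
  · exact mem_of_mem_inter_left (htrace ▸ mem_inter.mpr ⟨hxB, hxC⟩)

theorem famUnion_singleton (A : Finset ℕ) : famUnion {A} = A :=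
  sup_singleton

theorem famUnion_insert (A : Finset ℕ) (Γ : Finset (Finset ℕ)) :
    famUnion (insert A Γ) = A ∪ famUnion Γ :=
  sup_insert

theorem mem_famInter {Γ : Finset (Finset ℕ)} (hΓ : Γ.Nonempty) {x : ℕ} :
    x ∈ famInter Γ ↔ ∀ A ∈ Γ, x ∈ A := by
  obtain ⟨A, hA⟩ := hΓ
  simp only [famInter, mem_filter, mem_sup, id_eq, and_iff_right_iff_imp]
  exact fun hx => ⟨A, hA, hx A hA⟩

theorem famInter_singleton (A : Finset ℕ) : famInter {A} = A := by
  ext x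
  simp [mem_famInter]

theorem famInter_insert (A : Finset ℕ) {Γ : Finset (Finset ℕ)} (hΓ : Γ.Nonempty) :
    famInter (insert A Γ) = A ∩ famInter Γ := by
  ext x
  simp [mem_famInter, hΓ]

namespace IsHKE

variable {F G : Finset (Finset ℕ)} {α β : ℕ} {A B C : Finset ℕ}

theorem mono (hG : IsHKE G α) (hFG : F ⊆ G) : IsHKE F α :=
  ⟨hG.1, fun Γ hΓ => hG.2 Γ (hΓ.trans hFG)⟩

theorem card_of_mem (hF : IsHKE F α) (hA : A ∈ F) : #A = α := by
  have h := hF.2 {A} (singleton_subset_iff.mpr hA) (singleton_nonempty A)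
  rw [famUnion_singleton, famInter_singleton] at h
  omega

theorem alpha_unique (hα : IsHKE F α) (hβ : IsHKE F β) (hF : F.Nonempty) : α = β := by
  obtain ⟨A, hA⟩ := hF
  exact (hα.card_of_mem hA).symm.trans (hβ.card_of_mem hA)

theorem card_union_add_card_inter_triple (hF : IsHKE F α) (hA : A ∈ F) (hB : B ∈ F)
    (hC : C ∈ F) : #(A ∪ B ∪ C) + #(A ∩ B ∩ C) = 2 * α := by
  have hsub : {A, B, C} ⊆ F := by simp [insert_subset_iff, hA, hB, hC]
  have h := hF.2 {A, B, C} hsub (insert_nonempty _ _)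
  rwa [famUnion_insert, famUnion_insert, famUnion_singleton,
    famInter_insert _ (insert_nonempty _ _), famInter_insert _ (singleton_nonempty _),
    famInter_singleton, ← union_assoc, ← inter_assoc] at h

theorem injOn_inter (hF : IsHKE F α) (hC : C ∈ F) : Set.InjOn (· ∩ C) (F : Set (Finset ℕ)) := by
  have subset_of_trace_eq {A B : Finset ℕ} (hA : A ∈ F) (hB : B ∈ F) (htrace : A ∩ C = B ∩ C) :
      B ⊆ A := by
    refine subset_of_inter_eq_inter_of_card_le htrace (le_of_eq ?_)
    rw [hF.card_union_add_card_inter_triple hA hB hC, hF.card_of_mem hA, hF.card_of_mem hC,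
      two_mul]
  intro A hA B hB htrace
  exact (subset_of_trace_eq hB hA htrace.symm).antisymm (subset_of_trace_eq hA hB htrace)

theorem card_le_two_pow (hF : IsHKE F α) : #F ≤ 2 ^ α := by
  rcases F.eq_empty_or_nonempty with rfl | ⟨C, hC⟩
  · simp
  · calc
      #F ≤ #C.powerset := card_le_card_of_injOn (· ∩ C)
        (fun _ _ => mem_powerset.mpr inter_subset_right) (hF.injOn_inter hC)
      _ = 2 ^ α := by rw [card_powerset, hF.card_of_mem hC]

end IsHKE

/-- an hke collection `F` with `|F| = 2 ^ α(F)` is maximal: for every set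
`D ∉ F`, the collection `F ∪ {D}` is not an hke collection. -/
theorem maximal_of_card_eq_two_pow (F : Finset (Finset ℕ)) (α : ℕ) (hF : IsHKE F α)
    (hcard : F.card = 2 ^ α) :
    ∀ D : Finset ℕ, D ∉ F → ¬ ∃ β, IsHKE (insert D F) β := by
  rintro D hD ⟨β, hβ⟩
  have hne : F.Nonempty := card_pos.mp (hcard ▸ Nat.two_pow_pos α)
  obtain rfl : α = β := hF.alpha_unique (hβ.mono (subset_insert D F)) hne
  have hle : #(insert D F) ≤ 2 ^ α := hβ.card_le_two_pow
  rw [card_insert_of_notMem hD, hcard] at hle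
  exact Nat.not_succ_le_self _ hle
end
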